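/- Let H be a separable infinite-dimensional complex Hilbert space and let L be a nonabelian (i.e. [L,L] ≠ {0}) Lie subalgebra of B(H) consisting of compact operators. If the two-sided ideal (L) generated by L is not soft-edged, i.e. (L) ≠ (L)·K(H), then L is not simple: there exists a Lie ideal J of L with J ≠ {0} and J ≠ L. -/

import Mathlib

/-- The two-sided ideal of compact operators on `H`. -/
noncomputable def compactIdeal (H : Type*) [NormedAddCommGroup H]
    [InnerProductSpace ℂ H] : TwoSidedIdeal (H →L[ℂ] H) :=
  TwoSidedIdeal.mk' {T : H →L[ℂ] H | IsCompactOperator (T : H → H)}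
    isCompactOperator_zero
    (fun hx hy => hx.add hy)
    (fun hx => hx.neg)
    (fun {x y} hy => by simpa [Function.comp] using hy.clm_comp x)
    (fun {x y} hx => by simpa [Function.comp] using hx.comp_clm y)

/-- The product `I·J` of two two-sided ideals: the two-sided ideal whose elements are the
finite sums of products `XY` with `X ∈ I` and `Y ∈ J`. -/
noncomputable def idealMul {R : Type*} [Ring R] (I J : TwoSidedIdeal R) : TwoSidedIdeal R :=
  TwoSidedIdeal.span {x : R | ∃ a ∈ I, ∃ b ∈ J, x = a * b}

/-! The derived algebra `[L, L]` is a Lie ideal of `L`, nonzero because `L` is nonabelian. If it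
were all of `L`, every element of `L` would be a linear combination of commutators `AB - BA`, hence
of products of two elements of `L`, so `(L) = (L)·(L)`. For `L ⊆ K(H)` this would give
`(L) ⊆ (L)·K(H) ⊆ (L)`, i.e. `(L)` would be soft-edged. -/

section LieDerived

variable {k 𝔤 : Type*} [CommRing k] [LieRing 𝔤] [LieAlgebra k 𝔤] {L M : Submodule k 𝔤}

/-- The linear span `[L, L]` of the brackets of elements of `L`. It is a submodule of the ambient
Lie algebra, and `L` itself need not be closed under the bracket. -/
def lieDerived (L : Submodule k 𝔤) : Submodule k 𝔤 :=
  Submodule.span k {⁅x, y⁆ | (x ∈ L) (y ∈ L)}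

theorem lie_mem_lieDerived {x y : 𝔤} (hx : x ∈ L) (hy : y ∈ L) : ⁅x, y⁆ ∈ lieDerived L :=
  Submodule.subset_span ⟨x, hx, y, hy, rfl⟩

theorem lieDerived_le (h : ∀ x ∈ L, ∀ y ∈ L, ⁅x, y⁆ ∈ M) : lieDerived L ≤ M := by
  rw [lieDerived, Submodule.span_le]
  rintro _ ⟨x, hx, y, hy, rfl⟩
  exact h x hx y hy

end LieDerived

section IdealMul

variable {R : Type*} [Ring R] {I J J' : TwoSidedIdeal R}

theorem mul_mem_idealMul {a b : R} (ha : a ∈ I) (hb : b ∈ J) : a * b ∈ idealMul I J :=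
  TwoSidedIdeal.subset_span ⟨a, ha, b, hb, rfl⟩

theorem idealMul_le {P : TwoSidedIdeal R} (h : ∀ a ∈ I, ∀ b ∈ J, a * b ∈ P) :
    idealMul I J ≤ P := by
  rw [idealMul, TwoSidedIdeal.span_le]
  rintro _ ⟨a, ha, b, hb, rfl⟩
  exact h a ha b hb

theorem idealMul_le_left : idealMul I J ≤ I :=
  idealMul_le fun _ ha b _ => I.mul_mem_right _ b ha

theorem idealMul_mono_right (h : J ≤ J') : idealMul I J ≤ idealMul I J' :=
  idealMul_le fun _ ha _ hb => mul_mem_idealMul ha (h hb)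

end IdealMul

section Algebra

attribute [local instance] LieRing.ofAssociativeRing

variable {k R : Type*} [CommRing k] [Ring R] [Algebra k R] {L : Submodule k R}

theorem lieDerived_subset_idealMul_span :
    (lieDerived L : Set R) ⊆
      idealMul (TwoSidedIdeal.span (L : Set R)) (TwoSidedIdeal.span (L : Set R)) := by
  set P := idealMul (TwoSidedIdeal.span (L : Set R)) (TwoSidedIdeal.span (L : Set R))
  have mul_mem {x y : R} (hx : x ∈ L) (hy : y ∈ L) : x * y ∈ P :=
    mul_mem_idealMul (TwoSidedIdeal.subset_span hx) (TwoSidedIdeal.subset_span hy)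
  have lieDerived_le_P : lieDerived L ≤ (TwoSidedIdeal.asIdeal P).restrictScalars k :=
    lieDerived_le fun x hx y hy => P.sub_mem (mul_mem hx hy) (mul_mem hy hx)
  exact lieDerived_le_P

theorem span_eq_idealMul_of_le_lieDerived {K : TwoSidedIdeal R} (hLK : (L : Set R) ⊆ K)
    (hL : L ≤ lieDerived L) :
    TwoSidedIdeal.span (L : Set R) = idealMul (TwoSidedIdeal.span (L : Set R)) K := by
  refine le_antisymm ?_ idealMul_le_left
  calc TwoSidedIdeal.span (L : Set R)
      ≤ idealMul (TwoSidedIdeal.span (L : Set R)) (TwoSidedIdeal.span (L : Set R)) :=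
        TwoSidedIdeal.span_le.mpr fun _ hT => lieDerived_subset_idealMul_span (hL hT)
    _ ≤ idealMul (TwoSidedIdeal.span (L : Set R)) K :=
        idealMul_mono_right (TwoSidedIdeal.span_le.mpr hLK)

theorem stmt3_general {K : TwoSidedIdeal R} (hLie : ∀ A ∈ L, ∀ B ∈ L, ⁅A, B⁆ ∈ L)
    (hLK : (L : Set R) ⊆ K) (hnonabelian : ∃ A ∈ L, ∃ B ∈ L, ⁅A, B⁆ ≠ 0)
    (hnotsoft :
      TwoSidedIdeal.span (L : Set R) ≠ idealMul (TwoSidedIdeal.span (L : Set R)) K) :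
    ∃ J : Submodule k R, J ≤ L ∧ (∀ A ∈ L, ∀ B ∈ J, ⁅A, B⁆ ∈ J) ∧ J ≠ ⊥ ∧ J ≠ L := by
  have hle : lieDerived L ≤ L := lieDerived_le hLie
  obtain ⟨A, hA, B, hB, hAB⟩ := hnonabelian
  exact ⟨lieDerived L, hle, fun _ hX _ hY => lie_mem_lieDerived hX (hle hY),
    (Submodule.ne_bot_iff _).mpr ⟨⁅A, B⁆, lie_mem_lieDerived hA hB, hAB⟩,
    fun hL => hnotsoft (span_eq_idealMul_of_le_lieDerived hLK hL.ge)⟩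

end Algebra

theorem mem_compactIdeal {H : Type*} [NormedAddCommGroup H] [InnerProductSpace ℂ H]
    {T : H →L[ℂ] H} : T ∈ compactIdeal H ↔ IsCompactOperator (T : H → H) :=
  TwoSidedIdeal.mem_mk' ..

/-- **Corollary.** Let `H` be a separable infinite-dimensional complex Hilbert space and `L`
a nonabelian Lie subalgebra of `B(H)` consisting of compact operators.  If the two-sided
ideal `(L)` generated by `L` is not soft-edged, i.e. `(L) ≠ (L)·K(H)`, then `L` is not
simple: there is a Lie ideal `J` of `L` with `J ≠ {0}` and `J ≠ L`. -/
theorem stmt3 {H : Type*} [NormedAddCommGroup H] [InnerProductSpace ℂ H]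
    [CompleteSpace H] [TopologicalSpace.SeparableSpace H]
    (hHinf : ¬ FiniteDimensional ℂ H)
    (L : Submodule ℂ (H →L[ℂ] H))
    (hLie : ∀ A ∈ L, ∀ B ∈ L, A * B - B * A ∈ L)
    (hLcompact : ∀ T ∈ L, IsCompactOperator (T : H → H))
    (hnonabelian : ∃ A ∈ L, ∃ B ∈ L, A * B - B * A ≠ 0)
    (hnotsoft :
      TwoSidedIdeal.span (L : Set (H →L[ℂ] H)) ≠
        idealMul (TwoSidedIdeal.span (L : Set (H →L[ℂ] H))) (compactIdeal H)) :
    ∃ J : Submodule ℂ (H →L[ℂ] H),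
      J ≤ L ∧ (∀ A ∈ L, ∀ B ∈ J, A * B - B * A ∈ J) ∧ J ≠ ⊥ ∧ J ≠ L :=
  stmt3_general hLie (fun T hT => mem_compactIdeal.mpr (hLcompact T hT)) hnonabelian hnotsoft
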